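/- Let n ≥ 3, k ≥ 2, and let σ ∈ S_{n,k}^{1≺n}(1324). Then there exist a unique integer m with 2 ≤ m ≤ n−1, a unique primitive σ₁ ∈ S_{m,1}^{1≺m}(1324), and a unique σ₂ ∈ S_{ℓ,k−1}^{1≺ℓ}(1324) with ℓ = n−m+1, such that σ = σ₁ ⊙ σ₂, i.e., σ in one-line notation is the concatenation π̂₂ π₁ 1 m θ̂₂ n τ̂₂ τ₁, where σ₁ = π₁ · (1) · (m) · τ₁, σ₂ = π₂ · (1) · θ₂ · (ℓ) · τ₂ (with π₂ the prefix of σ₂ before its entry 1, θ₂ the word strictly between its entries 1 and ℓ, τ₂ the suffix after its entry ℓ), and π̂₂, θ̂₂, τ̂₂ are obtained from π₂, θ₂, τ₂ by increasing every entry by m−1. -/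

import Mathlib

/-- A permutation of `{1,…,n}` (encoded as `Equiv.Perm (Fin n)` with 0-based values)
avoids the pattern 1324 if there are no indices `i < j < k < l` with
`σ i < σ k < σ j < σ l`. -/
def Avoids1324 {n : ℕ} (σ : Equiv.Perm (Fin n)) : Prop :=
  ¬ ∃ i j k l : Fin n, i < j ∧ j < k ∧ k < l ∧ σ i < σ k ∧ σ k < σ j ∧ σ j < σ l

/-- The set `S_{n,k}^{a ≺ n}(1324)`: 1324-avoiding permutations with the entry `a`
exactly `k` places to the left of the entry `n`, and the entries `1, …, a-1` all to
the right of `n`.  (Values are 0-based: the entry `a` is `⟨a-1, _⟩`.) -/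
def SPerm (n a k : ℕ) : Set (Equiv.Perm (Fin n)) :=
  {σ | Avoids1324 σ ∧ ∃ hn : n - 1 < n, ∃ ha : a - 1 < n,
    ((σ.symm ⟨n - 1, hn⟩ : Fin n) : ℕ) = ((σ.symm ⟨a - 1, ha⟩ : Fin n) : ℕ) + k ∧
    ∀ b : Fin n, (b : ℕ) + 1 < a → σ.symm ⟨n - 1, hn⟩ < σ.symm b}

/-- One-line notation of a permutation, as a list of 1-based values. -/
def word {n : ℕ} (σ : Equiv.Perm (Fin n)) : List ℕ :=
  List.ofFn fun i => (σ i : ℕ) + 1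

/-!
The index `m` is forced to be the entry right after `1`. In `σ = π 1 m θ n τ`, the entry `1` may
play the smallest and `n` the largest letter of a pattern: an entry of `θ` below `m` gives
the pattern `1 m x n`, and `x < m < y` with `x` before `y` gives `x y m n` inside `π` and
`1 m x y` inside `τ`. Hence `θ` lies above `m`, and in `π` and in `τ` all entries above `m` precede
those below. So `σ` is glued from its subword of entries `≤ m` and its subword of entries `≥ m`.
Conversely, in any factorization these two subwords are `σ₁` and `σ₂` raised by `m - 1`,
which gives uniqueness, and avoidance of 1324 passes to subwords.
-/

section ListLemmas

variable {α : Type*}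

theorem sublist_ofFn_iff {n : ℕ} {f : Fin n → α} {L : List α} :
    L.Sublist (List.ofFn f) ↔ ∃ I : List (Fin n), I.Pairwise (· < ·) ∧ I.map f = L := by
  rw [List.ofFn_eq_map, List.sublist_map_iff]
  constructor
  · rintro ⟨I, hI, rfl⟩
    exact ⟨I, (List.pairwise_lt_finRange n).sublist hI, rfl⟩
  · rintro ⟨I, hI, rfl⟩
    have hsubperm : I.Subperm (List.finRange n) :=
      List.subperm_of_subset (hI.imp ne_of_lt) fun i _ => List.mem_finRange i
    exact ⟨I, List.sublist_of_subperm_of_pairwise hsubperm hI (List.pairwise_lt_finRange n), rfl⟩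

theorem idxOf_append_cons_self [DecidableEq α] {a : α} {A B : List α} (ha : a ∉ A) :
    (A ++ a :: B).idxOf a = A.length := by
  rw [List.idxOf_append_of_notMem ha, List.idxOf_cons_self, Nat.add_zero]

theorem notMem_left_of_nodup {a : α} {A B : List α} (h : (A ++ a :: B).Nodup) : a ∉ A :=
  fun ha => (List.nodup_middle.1 h).notMem (List.mem_append_left B ha)

theorem exists_append_cons_append_cons_of_idxOf_lt [DecidableEq α] {a b : α} {L : List α}
    (hb : b ∈ L) (hab : L.idxOf a < L.idxOf b) :
    ∃ A B C : List α, L = A ++ a :: (B ++ b :: C) := by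
  have ha : a ∈ L := List.idxOf_lt_length_iff.1 (hab.trans (List.idxOf_lt_length_of_mem hb))
  obtain ⟨A, D, rfl, haA⟩ := List.eq_append_cons_of_mem ha
  rw [idxOf_append_cons_self haA] at hab
  have hbA : b ∉ A := fun h => by
    rw [List.idxOf_append_of_mem h] at hab
    exact hab.not_gt (List.idxOf_lt_length_of_mem h)
  have hba : b ≠ a := by
    rintro rfl
    exact hab.ne (idxOf_append_cons_self haA).symm
  have hbD : b ∈ D := by simpa [hbA, hba] using hb
  obtain ⟨B, C, rfl⟩ := List.append_of_mem hbD
  exact ⟨A, B, C, rfl⟩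

theorem filter_ge_append_filter_le [LinearOrder α] {m : α} {L : List α} (hm : m ∉ L)
    (h : L.Pairwise fun x y => x < m → y < m) :
    L.filter (m ≤ ·) ++ L.filter (· ≤ m) = L := by
  induction L with
  | nil => rfl
  | cons x L ih =>
    rw [List.mem_cons, not_or] at hm
    rw [List.pairwise_cons] at h
    rcases lt_or_gt_of_ne hm.1 with hmx | hxm
    · simpa [hmx.le, hmx.not_ge] using ih hm.2 h.2
    · have hL : ∀ y ∈ L, y < m := fun y hy => h.1 y hy hxm
      have hge : L.filter (m ≤ ·) = [] := by simpa using hL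
      have hle : L.filter (· ≤ m) = L := by simpa using fun y hy => (hL y hy).le
      simp [hge, hle, hxm.le, hxm.not_ge]

end ListLemmas

section PatternAvoidance

variable {α : Type*}

/-- Pattern avoidance for words: no subword `a b c d` of `L` is ordered like `1324`. -/
def Avoids1324Word [LT α] (L : List α) : Prop :=
  ∀ ⦃a b c d : α⦄, [a, b, c, d].Sublist L → a < c → c < b → ¬ b < d

theorem Avoids1324Word.sublist [LT α] {L L' : List α} (h : Avoids1324Word L)
    (hL : L'.Sublist L) : Avoids1324Word L' :=
  fun _ _ _ _ hs => h (hs.trans hL)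

theorem Avoids1324Word.of_map [Preorder α] {β : Type*} [Preorder β] {f : α → β}
    (hf : StrictMono f) {L : List α} (h : Avoids1324Word (L.map f)) : Avoids1324Word L :=
  fun _ _ _ _ hs hac hcb hbd => h (hs.map f) (hf hac) (hf hcb) (hf hbd)

theorem avoids1324Word_word {n : ℕ} {σ : Equiv.Perm (Fin n)} :
    Avoids1324Word (word σ) ↔ Avoids1324 σ := by
  constructor
  · rintro h ⟨i, j, k, l, hij, hjk, hkl, hik, hkj, hjl⟩
    have hsub : ([i, j, k, l].map fun p => (σ p : ℕ) + 1).Sublist (word σ) :=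
      sublist_ofFn_iff.2 ⟨_, List.isChain_iff_pairwise.1 (by simp [hij, hjk, hkl]), rfl⟩
    exact h hsub (Nat.succ_lt_succ hik) (Nat.succ_lt_succ hkj) (Nat.succ_lt_succ hjl)
  · intro h a b c d hs hac hcb hbd
    obtain ⟨I, hI, hmap⟩ := sublist_ofFn_iff.1 hs
    obtain ⟨i, j, k, l, rfl⟩ : ∃ i j k l, I = [i, j, k, l] :=
      List.length_eq_four.1 (by simpa using congrArg List.length hmap)
    simp only [List.map_cons, List.map_nil, List.cons.injEq, and_true] at hmap
    obtain ⟨rfl, rfl, rfl, rfl⟩ := hmap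
    simp only [← List.isChain_iff_pairwise, List.isChain_cons_cons] at hI
    exact h ⟨i, j, k, l, hI.1, hI.2.1, hI.2.2.1, Nat.lt_of_succ_lt_succ hac,
      Nat.lt_of_succ_lt_succ hcb, Nat.lt_of_succ_lt_succ hbd⟩

variable [LinearOrder α] {a b m : α} {π θ τ : List α}

theorem Avoids1324Word.pairwise_of_append_pair (h : Avoids1324Word (π ++ [m, b]))
    (hm : m ∉ π) (hb : ∀ x ∈ π, x < b) : π.Pairwise fun x y => x < m → y < m := by
  refine List.pairwise_of_forall_sublist fun {x y} hxy hxm => ?_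
  have hy : y ∈ π := hxy.subset (by simp)
  by_contra! hmy
  have hmy' : m < y := hmy.lt_of_ne (by rintro rfl; exact hm hy)
  exact h (hxy.append (List.Sublist.refl [m, b])) hxm hmy' (hb y hy)

theorem Avoids1324Word.pairwise_of_cons_cons (h : Avoids1324Word (a :: m :: τ))
    (hm : m ∉ τ) (ha : ∀ x ∈ τ, a < x) : τ.Pairwise fun x y => x < m → y < m := by
  refine List.pairwise_of_forall_sublist fun {x y} hxy hxm => ?_
  have hx : x ∈ τ := hxy.subset (by simp)
  have hy : y ∈ τ := hxy.subset (by simp)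
  by_contra! hmy
  have hmy' : m < y := hmy.lt_of_ne (by rintro rfl; exact hm hy)
  exact h ((hxy.cons_cons m).cons_cons a) (ha x hx) hxm hmy'

theorem Avoids1324Word.lt_of_mem_between (h : Avoids1324Word (a :: m :: (θ ++ [b])))
    (hm : m ∉ θ) (ha : ∀ x ∈ θ, a < x) (hb : m < b) : ∀ x ∈ θ, m < x := by
  intro x hx
  by_contra! hxm
  have hxm' : x < m := hxm.lt_of_ne (by rintro rfl; exact hm hx)
  have hsub : [x, b].Sublist (θ ++ [b]) :=
    (List.singleton_sublist.2 hx).append (List.Sublist.refl [b])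
  exact h ((hsub.cons_cons m).cons_cons a) (ha x hx) hxm' hb

end PatternAvoidance

section PermutationWords

/-- Words that are the one-line notation of a permutation of `{1,…,n}`. -/
structure IsPermWord (n : ℕ) (L : List ℕ) : Prop where
  nodup : L.Nodup
  mem_iff : ∀ {x}, x ∈ L ↔ 1 ≤ x ∧ x ≤ n

variable {n m k : ℕ} {w A B : List ℕ} {σ : Equiv.Perm (Fin n)}

theorem isPermWord_word (σ : Equiv.Perm (Fin n)) : IsPermWord n (word σ) where
  nodup := List.nodup_ofFn.2 fun i j hij => σ.injective (Fin.ext (Nat.succ_injective hij))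
  mem_iff {x} := by
    rw [word, List.mem_ofFn]
    constructor
    · rintro ⟨i, rfl⟩
      exact ⟨Nat.succ_pos _, (σ i).isLt⟩
    · rintro ⟨hx, hxn⟩
      exact ⟨σ.symm ⟨x - 1, by omega⟩, by simp [Nat.sub_add_cancel hx]⟩

theorem word_injective : Function.Injective (word : Equiv.Perm (Fin n) → List ℕ) := by
  intro σ τ h
  ext i
  exact Nat.succ_injective (congrFun (List.ofFn_injective h) i)

theorem IsPermWord.length_eq (h : IsPermWord n w) : w.length = n := by
  have hw : w.toFinset = Finset.Icc 1 n := by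
    ext x
    rw [List.mem_toFinset, h.mem_iff, Finset.mem_Icc]
  rw [← List.toFinset_card_of_nodup h.nodup, hw, Nat.card_Icc, Nat.add_sub_cancel]

theorem IsPermWord.exists_word_eq (h : IsPermWord n w) :
    ∃ σ : Equiv.Perm (Fin n), word σ = w := by
  obtain rfl := h.length_eq
  have hbounds (i : Fin w.length) : 1 ≤ w[i] ∧ w[i] ≤ w.length :=
    h.mem_iff.1 (List.getElem_mem i.isLt)
  let f (i : Fin w.length) : Fin w.length := ⟨w[i] - 1, by have := hbounds i; omega⟩
  have hf : Function.Injective f := by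
    intro i j hij
    have hsub : w[i] - 1 = w[j] - 1 := congrArg Fin.val hij
    have hval : w[i] = w[j] := Nat.sub_one_cancel (hbounds i).1 (hbounds j).1 hsub
    exact Fin.ext (h.nodup.getElem_inj_iff.1 hval)
  refine ⟨Equiv.ofBijective f (Finite.injective_iff_bijective.1 hf), ?_⟩
  calc word (Equiv.ofBijective f _) = List.ofFn fun i => w[i] :=
        congrArg List.ofFn (funext fun i => Nat.sub_add_cancel (hbounds i).1)
    _ = w := List.ofFn_getElem

theorem IsPermWord.one_lt_of_mem (h : IsPermWord n (A ++ 1 :: B)) :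
    ∀ x ∈ A ++ B, 1 < x := by
  intro x hx
  have hne : 1 ∉ A ++ B := (List.nodup_middle.1 h.nodup).notMem
  have hpos : 1 ≤ x := (h.mem_iff.1 (List.perm_middle.symm.subset (.tail _ hx))).1
  exact hpos.lt_of_ne (by rintro rfl; exact hne hx)

theorem IsPermWord.lt_of_mem (h : IsPermWord n (A ++ n :: B)) :
    ∀ x ∈ A ++ B, x < n := by
  intro x hx
  have hne : n ∉ A ++ B := (List.nodup_middle.1 h.nodup).notMem
  have hle : x ≤ n := (h.mem_iff.1 (List.perm_middle.symm.subset (.tail _ hx))).2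
  exact hle.lt_of_ne (by rintro rfl; exact hne hx)

theorem IsPermWord.filter_le (h : IsPermWord n w) (hmn : m ≤ n) :
    IsPermWord m (w.filter (· ≤ m)) where
  nodup := h.nodup.filter _
  mem_iff {x} := by
    rw [List.mem_filter, h.mem_iff, decide_eq_true_iff]
    omega

theorem map_add_map_sub_filter_ge (m : ℕ) (L : List ℕ) :
    ((L.filter (m ≤ ·)).map (· - (m - 1))).map (· + (m - 1)) = L.filter (m ≤ ·) := by
  rw [List.map_map]
  refine (List.map_congr_left fun x hx => ?_).trans (List.map_id _)
  have hmx : m ≤ x := by simpa using List.of_mem_filter hx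
  exact Nat.sub_add_cancel ((Nat.sub_le m 1).trans hmx)

theorem IsPermWord.map_sub_filter_ge (h : IsPermWord n w) (hm : 1 ≤ m) (hmn : m ≤ n) :
    IsPermWord (n - m + 1) ((w.filter (m ≤ ·)).map (· - (m - 1))) := by
  have hmap := map_add_map_sub_filter_ge m w
  refine ⟨List.Nodup.of_map _ (hmap ▸ h.nodup.filter _), fun {x} => ?_⟩
  rw [← List.mem_map_of_injective (add_left_injective (m - 1)), hmap, List.mem_filter,
    h.mem_iff, decide_eq_true_iff]
  omega

theorem idxOf_word (x : Fin n) : (word σ).idxOf (x + 1 : ℕ) = σ.symm x := by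
  have hlt : (σ.symm x : ℕ) < (word σ).length :=
    (isPermWord_word σ).length_eq.symm ▸ (σ.symm x).isLt
  have hget : (word σ)[(σ.symm x : ℕ)] = (x : ℕ) + 1 := by simp [word]
  rw [← hget]
  exact (isPermWord_word σ).nodup.idxOf_getElem _ hlt

theorem mem_sPerm_one_iff (hn : 0 < n) :
    σ ∈ SPerm n 1 k ↔
      Avoids1324Word (word σ) ∧ (word σ).idxOf n = (word σ).idxOf 1 + k := by
  have hmax := idxOf_word (σ := σ) ⟨n - 1, Nat.sub_one_lt_of_lt hn⟩
  have hmin := idxOf_word (σ := σ) ⟨0, hn⟩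
  rw [Nat.sub_add_cancel hn] at hmax
  rw [avoids1324Word_word, hmax, hmin]
  refine and_congr_right fun _ => ⟨fun ⟨_, _, h, _⟩ => h, fun h => ?_⟩
  exact ⟨_, _, h, fun b hb => absurd hb (by omega)⟩

theorem mem_sPerm_one_iff_of_word_eq {π θ τ : List ℕ}
    (hσ : word σ = π ++ 1 :: (θ ++ n :: τ)) :
    σ ∈ SPerm n 1 k ↔ Avoids1324Word (word σ) ∧ k = θ.length + 1 := by
  have hw := isPermWord_word σ
  have hn : 1 ≤ n := (hw.mem_iff.1 (by simp [hσ] : n ∈ word σ)).1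
  have hone : (word σ).idxOf 1 = π.length := by
    rw [hσ] at hw ⊢
    exact idxOf_append_cons_self (notMem_left_of_nodup hw.nodup)
  have hmax : (word σ).idxOf n = π.length + (θ.length + 1) := by
    rw [hσ, ← List.cons_append, ← List.append_assoc] at hw ⊢
    rw [idxOf_append_cons_self (notMem_left_of_nodup hw.nodup), List.length_append,
      List.length_cons]
  rw [mem_sPerm_one_iff hn, hone, hmax, Nat.add_left_cancel_iff, eq_comm (a := k)]

theorem exists_word_eq_of_mem_sPerm_one (hk : 0 < k) (hσ : σ ∈ SPerm n 1 k) :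
    ∃ π θ τ : List ℕ, word σ = π ++ 1 :: (θ ++ n :: τ) := by
  have hn : 0 < n := Nat.zero_lt_of_lt hσ.2.fst
  have hidx := ((mem_sPerm_one_iff hn).1 hσ).2
  exact exists_append_cons_append_cons_of_idxOf_lt
    ((isPermWord_word σ).mem_iff.2 ⟨hn, le_rfl⟩) (by omega)

end PermutationWords

section Product

/-- The relation `w = w₁ ⊙ w₂` between words: `w₁ = π₁ 1 m τ₁`, `w₂ = π₂ 1 θ₂ ℓ τ₂` with
`ℓ = n - m + 1`, and `w = π̂₂ π₁ 1 m θ̂₂ n τ̂₂ τ₁`, the hat raising every entry by `m - 1`. -/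
def IsOdot (n m : ℕ) (w w₁ w₂ : List ℕ) : Prop :=
  ∃ π₁ τ₁ π₂ θ₂ τ₂ : List ℕ,
    w₁ = π₁ ++ 1 :: m :: τ₁ ∧
    w₂ = π₂ ++ 1 :: (θ₂ ++ (n - m + 1) :: τ₂) ∧
    w = π₂.map (· + (m - 1)) ++ π₁ ++ 1 :: m ::
      (θ₂.map (· + (m - 1)) ++ n :: (τ₂.map (· + (m - 1)) ++ τ₁))

variable {n m m' k : ℕ} {w w₁ w₂ w₁' w₂' L : List ℕ}

theorem IsOdot.two_le (h : IsOdot n m w w₁ w₂) (h₁ : IsPermWord m w₁) : 2 ≤ m := by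
  obtain ⟨π₁, τ₁, -, -, -, rfl, -⟩ := h
  exact h₁.one_lt_of_mem m (by simp)

theorem IsOdot.lt (h : IsOdot n m w w₁ w₂) (h₂ : IsPermWord (n - m + 1) w₂) : m < n := by
  obtain ⟨-, -, π₂, θ₂, τ₂, -, rfl, -⟩ := h
  have := h₂.one_lt_of_mem (n - m + 1) (by simp)
  omega

theorem filter_le_map_add (hL : ∀ x ∈ L, 1 < x) :
    (L.map (· + (m - 1))).filter (· ≤ m) = [] := by
  simp only [List.filter_eq_nil_iff, List.forall_mem_map, decide_eq_true_iff]
  intro x hx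
  have := hL x hx
  omega

theorem filter_ge_map_add (hL : ∀ x ∈ L, 1 < x) :
    (L.map (· + (m - 1))).filter (m ≤ ·) = L.map (· + (m - 1)) := by
  simp only [List.filter_eq_self, List.forall_mem_map, decide_eq_true_iff]
  intro x hx
  have := hL x hx
  omega

theorem IsOdot.filter_le (h : IsOdot n m w w₁ w₂) (h₁ : IsPermWord m w₁)
    (h₂ : IsPermWord (n - m + 1) w₂) : w.filter (· ≤ m) = w₁ := by
  have hmn : m < n := h.lt h₂
  have hm : 2 ≤ m := h.two_le h₁
  obtain ⟨π₁, τ₁, π₂, θ₂, τ₂, rfl, rfl, rfl⟩ := h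
  have hlow : ∀ x ∈ π₁ ++ 1 :: m :: τ₁, x ≤ m := fun x hx => (h₁.mem_iff.1 hx).2
  have hhigh := h₂.one_lt_of_mem
  simp only [List.forall_mem_append, List.forall_mem_cons] at hlow hhigh
  have hπ₁ : π₁.filter (· ≤ m) = π₁ := by simpa using hlow.1
  have hτ₁ : τ₁.filter (· ≤ m) = τ₁ := by simpa using hlow.2.2.2
  simp [hπ₁, hτ₁, filter_le_map_add hhigh.1, filter_le_map_add hhigh.2.1,
    filter_le_map_add hhigh.2.2.2, hmn, one_le_two.trans hm]

theorem IsOdot.filter_ge (h : IsOdot n m w w₁ w₂) (h₁ : IsPermWord m w₁)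
    (h₂ : IsPermWord (n - m + 1) w₂) : w.filter (m ≤ ·) = w₂.map (· + (m - 1)) := by
  have hmn : m < n := h.lt h₂
  have hm : 2 ≤ m := h.two_le h₁
  obtain ⟨π₁, τ₁, π₂, θ₂, τ₂, rfl, rfl, rfl⟩ := h
  have hlow := IsPermWord.lt_of_mem (A := π₁ ++ [1]) (B := τ₁) (by simpa using h₁)
  have hhigh := h₂.one_lt_of_mem
  simp only [List.forall_mem_append, List.forall_mem_cons] at hlow hhigh
  have hπ₁ : π₁.filter (m ≤ ·) = [] := by simpa using hlow.1.1
  have hτ₁ : τ₁.filter (m ≤ ·) = [] := by simpa using hlow.2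
  have hone : 1 + (m - 1) = m := by omega
  have hmax : n - m + 1 + (m - 1) = n := by omega
  simp [hπ₁, hτ₁, filter_ge_map_add hhigh.1, filter_ge_map_add hhigh.2.1,
    filter_ge_map_add hhigh.2.2.2, hmn.le, one_lt_two.trans_le hm, hone, hmax]

theorem IsOdot.index_unique (h : IsOdot n m w w₁ w₂) (h' : IsOdot n m' w w₁' w₂')
    (hw : w.Nodup) : m = m' := by
  obtain ⟨π₁, τ₁, π₂, θ₂, τ₂, -, -, rfl⟩ := h
  obtain ⟨π₁', τ₁', π₂', θ₂', τ₂', -, -, hw'⟩ := h'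
  have hone := (List.nodup_middle.1 hw).notMem
  rw [List.mem_append, not_or] at hone
  have htail := ((List.append_cons_inj_of_notMem hone.1 hone.2).1 hw').2.2
  exact (List.cons.inj htail).1

theorem IsPermWord.splits_of_avoids1324Word {π θ τ : List ℕ}
    (h : IsPermWord n (π ++ 1 :: m :: (θ ++ n :: τ)))
    (hav : Avoids1324Word (π ++ 1 :: m :: (θ ++ n :: τ))) :
    π.filter (m ≤ ·) ++ π.filter (· ≤ m) = π ∧ (∀ x ∈ θ, m < x) ∧
      τ.filter (m ≤ ·) ++ τ.filter (· ≤ m) = τ := by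
  have hmin := h.one_lt_of_mem
  have hmax := IsPermWord.lt_of_mem (A := π ++ 1 :: m :: θ) (B := τ) (by simpa using h)
  have hm : m ∉ (π ++ [1]) ++ (θ ++ n :: τ) := by
    have hnodup : ((π ++ [1]) ++ m :: (θ ++ n :: τ)).Nodup := by simpa using h.nodup
    exact (List.nodup_middle.1 hnodup).notMem
  simp only [List.forall_mem_append, List.forall_mem_cons] at hmin hmax
  simp only [List.mem_append, List.mem_cons, not_or] at hm
  have hav' : Avoids1324Word (1 :: m :: (θ ++ n :: τ)) :=
    hav.sublist (List.sublist_append_right π _)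
  refine ⟨filter_ge_append_filter_le hm.1.1 ?_, ?_, filter_ge_append_filter_le hm.2.2.2 ?_⟩
  · have hsub : (π ++ [m, n]).Sublist (π ++ 1 :: m :: (θ ++ n :: τ)) := by simp
    exact (hav.sublist hsub).pairwise_of_append_pair hm.1.1 hmax.1.1
  · have hsub : (1 :: m :: (θ ++ [n])).Sublist (1 :: m :: (θ ++ n :: τ)) := by simp
    exact (hav'.sublist hsub).lt_of_mem_between hm.2.1 hmin.2.2.1 hmax.1.2.2.1
  · have hτ : τ.Sublist (θ ++ n :: τ) :=
      (List.sublist_cons_self n τ).trans (List.sublist_append_right θ _)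
    have hsub : (1 :: m :: τ).Sublist (1 :: m :: (θ ++ n :: τ)) := (hτ.cons_cons m).cons_cons 1
    exact (hav'.sublist hsub).pairwise_of_cons_cons hm.2.2.2 hmin.2.2.2.2

theorem isOdot_filter {π θ τ : List ℕ} (h : IsPermWord n w) (hav : Avoids1324Word w)
    (hw : w = π ++ 1 :: m :: (θ ++ n :: τ)) :
    IsOdot n m w (w.filter (· ≤ m)) ((w.filter (m ≤ ·)).map (· - (m - 1))) := by
  subst hw
  obtain ⟨hπ, hθ, hτ⟩ := h.splits_of_avoids1324Word hav
  have hm : 1 < m := h.one_lt_of_mem m (by simp)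
  have hmn : m < n :=
    IsPermWord.lt_of_mem (A := π ++ 1 :: m :: θ) (B := τ) (by simpa using h) m (by simp)
  have hθle : θ.filter (· ≤ m) = [] := by simpa using hθ
  have hθge : θ.filter (m ≤ ·) = θ := by simpa using fun x hx => (hθ x hx).le
  have hone : m - (m - 1) = 1 := by omega
  have hmax : n - (m - 1) = n - m + 1 := by omega
  refine ⟨π.filter (· ≤ m), τ.filter (· ≤ m), (π.filter (m ≤ ·)).map (· - (m - 1)),
    (θ.filter (m ≤ ·)).map (· - (m - 1)), (τ.filter (m ≤ ·)).map (· - (m - 1)), ?_, ?_, ?_⟩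
  · simp [hθle, hm.le, hmn]
  · simp [hmn.le, hm, hone, hmax]
  · rw [map_add_map_sub_filter_ge, map_add_map_sub_filter_ge, map_add_map_sub_filter_ge, hπ, hτ,
      hθge]

end Product

section Factorization

variable {n m k : ℕ} {σ : Equiv.Perm (Fin n)}

theorem IsOdot.mem_sPerm {σ₁ : Equiv.Perm (Fin m)} {σ₂ : Equiv.Perm (Fin (n - m + 1))}
    (h : IsOdot n m (word σ) (word σ₁) (word σ₂)) (hσ : σ ∈ SPerm n 1 k) :
    σ₁ ∈ SPerm m 1 1 ∧ σ₂ ∈ SPerm (n - m + 1) 1 (k - 1) := by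
  have hle := h.filter_le (isPermWord_word σ₁) (isPermWord_word σ₂)
  have hge := h.filter_ge (isPermWord_word σ₁) (isPermWord_word σ₂)
  obtain ⟨π₁, τ₁, π₂, θ₂, τ₂, hσ₁, hσ₂, hword⟩ := h
  obtain ⟨hav, hk⟩ :=
    (mem_sPerm_one_iff_of_word_eq (θ := m :: θ₂.map (· + (m - 1))) hword).1 hσ
  have hav₁ : Avoids1324Word (word σ₁) := hle ▸ hav.sublist List.filter_sublist
  have hav₂ : Avoids1324Word (word σ₂) :=
    .of_map (add_left_strictMono (a := m - 1)) (hge ▸ hav.sublist List.filter_sublist)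
  exact ⟨(mem_sPerm_one_iff_of_word_eq (θ := []) hσ₁).2 ⟨hav₁, rfl⟩,
    (mem_sPerm_one_iff_of_word_eq hσ₂).2 ⟨hav₂, by simp [hk]⟩⟩

theorem exists_isOdot_of_mem_sPerm_one (hk : 2 ≤ k) (hσ : σ ∈ SPerm n 1 k) :
    ∃ (m : ℕ) (σ₁ : Equiv.Perm (Fin m)) (σ₂ : Equiv.Perm (Fin (n - m + 1))),
      IsOdot n m (word σ) (word σ₁) (word σ₂) := by
  have hσw := isPermWord_word σ
  obtain ⟨π, θ, τ, hword⟩ := exists_word_eq_of_mem_sPerm_one (by omega) hσ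
  obtain ⟨hav, hθ⟩ := (mem_sPerm_one_iff_of_word_eq hword).1 hσ
  obtain ⟨m, θ, rfl⟩ := List.exists_cons_of_length_pos (l := θ) (by omega)
  have hm := hσw.mem_iff.1 (by simp [hword] : m ∈ word σ)
  obtain ⟨σ₁, hσ₁⟩ := (hσw.filter_le hm.2).exists_word_eq
  obtain ⟨σ₂, hσ₂⟩ := (hσw.map_sub_filter_ge hm.1 hm.2).exists_word_eq
  refine ⟨m, σ₁, σ₂, ?_⟩
  rw [hσ₁, hσ₂]
  exact isOdot_filter hσw hav hword

theorem IsOdot.factors_unique {σ₁ σ₁' : Equiv.Perm (Fin m)} {σ₂ σ₂' : Equiv.Perm (Fin (n - m + 1))}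
    (h : IsOdot n m (word σ) (word σ₁) (word σ₂))
    (h' : IsOdot n m (word σ) (word σ₁') (word σ₂')) : σ₁ = σ₁' ∧ σ₂ = σ₂' := by
  have h₁ := isPermWord_word σ₁
  have h₂ := isPermWord_word σ₂
  have h₁' := isPermWord_word σ₁'
  have h₂' := isPermWord_word σ₂'
  refine ⟨word_injective ((h.filter_le h₁ h₂).symm.trans (h'.filter_le h₁' h₂')),
    word_injective (List.map_injective_iff.2 (add_left_injective (m - 1)) ?_)⟩
  exact (h.filter_ge h₁ h₂).symm.trans (h'.filter_ge h₁' h₂')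

end Factorization

/-- every `σ ∈ S_{n,k}^{1≺n}(1324)` with `n ≥ 3`, `k ≥ 2` factors uniquely
as `σ = σ₁ ⊙ σ₂` with `σ₁ ∈ S_{m,1}^{1≺m}(1324)` primitive, `2 ≤ m ≤ n - 1`, and
`σ₂ ∈ S_{ℓ,k-1}^{1≺ℓ}(1324)`, `ℓ = n - m + 1`. -/
theorem stmt_4 (n k : ℕ) (hn : 3 ≤ n) (hk : 2 ≤ k)
    (σ : Equiv.Perm (Fin n)) (hσ : σ ∈ SPerm n 1 k) :
    ∃! d : Σ m : ℕ, Equiv.Perm (Fin m) × Equiv.Perm (Fin (n - m + 1)),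
      2 ≤ d.1 ∧ d.1 ≤ n - 1 ∧
      d.2.1 ∈ SPerm d.1 1 1 ∧
      d.2.2 ∈ SPerm (n - d.1 + 1) 1 (k - 1) ∧
      ∃ π₁ τ₁ π₂ θ₂ τ₂ : List ℕ,
        word d.2.1 = π₁ ++ 1 :: d.1 :: τ₁ ∧
        word d.2.2 = π₂ ++ 1 :: (θ₂ ++ (n - d.1 + 1) :: τ₂) ∧
        word σ = π₂.map (· + (d.1 - 1)) ++ π₁ ++ 1 :: d.1 ::
          (θ₂.map (· + (d.1 - 1)) ++ n :: (τ₂.map (· + (d.1 - 1)) ++ τ₁)) := by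
  obtain ⟨m, σ₁, σ₂, hodot⟩ := exists_isOdot_of_mem_sPerm_one hk hσ
  have hm := hodot.two_le (isPermWord_word σ₁)
  have hmn := hodot.lt (isPermWord_word σ₂)
  have hmem := hodot.mem_sPerm hσ
  refine ⟨⟨m, σ₁, σ₂⟩, ⟨hm, Nat.le_sub_one_of_lt hmn, hmem.1, hmem.2, hodot⟩, ?_⟩
  rintro ⟨m', σ₁', σ₂'⟩ ⟨-, -, -, -, hodot'⟩
  obtain rfl : m' = m := IsOdot.index_unique hodot' hodot (isPermWord_word σ).nodup
  obtain ⟨rfl, rfl⟩ := IsOdot.factors_unique hodot' hodot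
  rfl
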